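/- Let λ1>0, λ2≥0, λ3≥0 with λ2+λ3>0, and let f be the joint mass function of the bivariate Pseudo-Poisson distribution. Then the Fisher dispersion index of the second coordinate, DI(X2) = Var(X2)/E(X2) with moments computed as sums against f, equals 1 + λ3²·λ1/(λ2 + λ3·λ1); in particular DI(X2) > 1 (over-dispersion) whenever λ3 > 0. -/

import Mathlib

/-!
The Poisson weights `p n = exp (-a) * a ^ n / n!` satisfy `(n + 1) * p (n + 1) = a * p n`, which
gives the Stein-type identity `E[N * g N] = a * E[g (N + 1)]`. Taking `g = 1` and `g n = n` yields
the first two moments `a` and `a + a ^ 2` of a Poisson variable.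

Given `X1 = x`, the second coordinate is Poisson with mean `l2 + l3 * x`, so the inner sums are
these moments with `a = l2 + l3 * x`. They are polynomials of degree at most two in `x`, and the
outer sums follow from the moments of `X1`, which is Poisson with mean `l1`. The result is
`E X2 = l2 + l3 * l1` and `Var X2 = l2 + l3 * l1 + l3 ^ 2 * l1`.
-/

/-- The joint mass function of the bivariate Pseudo-Poisson distribution
with parameters `λ1, λ2, λ3` (with linear regression). -/
noncomputable def pseudoPoissonPMF (l1 l2 l3 : ℝ) (x1 x2 : ℕ) : ℝ :=
  (Real.exp (-l1) * l1 ^ x1 / (Nat.factorial x1)) *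
    (Real.exp (-(l2 + l3 * x1)) * (l2 + l3 * x1) ^ x2 / (Nat.factorial x2))

/-- The Poisson weight `exp (-a) * a ^ n / n!`, for an arbitrary real parameter `a`. -/
noncomputable def poissonWeight (a : ℝ) (n : ℕ) : ℝ :=
  Real.exp (-a) * a ^ n / (Nat.factorial n)

lemma poissonWeight_succ (a : ℝ) (n : ℕ) :
    ((n : ℝ) + 1) * poissonWeight a (n + 1) = a * poissonWeight a n := by
  have hn : (n : ℝ) + 1 ≠ 0 := by positivity
  have hf : (Nat.factorial n : ℝ) ≠ 0 := by positivity
  simp only [poissonWeight, Nat.factorial_succ, Nat.cast_mul, Nat.cast_add, Nat.cast_one]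
  field_simp
  ring

lemma hasSum_poissonWeight (a : ℝ) : HasSum (poissonWeight a) 1 := by
  have h := (NormedSpace.expSeries_div_hasSum_exp a).mul_left (Real.exp (-a))
  rw [← Real.exp_eq_exp_ℝ, ← Real.exp_add, neg_add_cancel, Real.exp_zero] at h
  exact h.congr_fun fun n => by rw [poissonWeight, mul_div_assoc]

/-- The identity `E[N * g N] = a * E[g (N + 1)]` for a Poisson variable `N` of mean `a`. -/
lemma hasSum_mul_poissonWeight {a s : ℝ} {g : ℕ → ℝ}
    (h : HasSum (fun n => g (n + 1) * poissonWeight a n) s) :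
    HasSum (fun n : ℕ => (n : ℝ) * g n * poissonWeight a n) (a * s) := by
  rw [← hasSum_nat_add_iff' 1]
  simp only [Finset.range_one, Finset.sum_singleton, Nat.cast_zero, zero_mul, sub_zero]
  refine (h.mul_left a).congr_fun fun n => ?_
  push_cast
  linear_combination g (n + 1) * poissonWeight_succ a n

lemma hasSum_poissonWeight_first (a : ℝ) :
    HasSum (fun n : ℕ => (n : ℝ) * poissonWeight a n) a := by
  have h := hasSum_mul_poissonWeight (a := a) (s := 1) (g := fun _ => 1)
    (by simpa using hasSum_poissonWeight a)
  simpa using h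

lemma hasSum_poissonWeight_second (a : ℝ) :
    HasSum (fun n : ℕ => (n : ℝ) ^ 2 * poissonWeight a n) (a + a ^ 2) := by
  have h := hasSum_mul_poissonWeight (a := a) (s := a + 1) (g := fun n => (n : ℝ))
    (((hasSum_poissonWeight_first a).add (hasSum_poissonWeight a)).congr_fun
      fun n => by push_cast; ring)
  rw [show a + a ^ 2 = a * (a + 1) by ring]
  simpa only [sq] using h

lemma pseudoPoissonPMF_eq (l1 l2 l3 : ℝ) (x1 x2 : ℕ) :
    pseudoPoissonPMF l1 l2 l3 x1 x2 = poissonWeight l1 x1 * poissonWeight (l2 + l3 * x1) x2 :=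
  rfl

lemma tsum_pseudoPoisson_first (l1 l2 l3 : ℝ) :
    ∑' x1 : ℕ, ∑' x2 : ℕ, (x2 : ℝ) * pseudoPoissonPMF l1 l2 l3 x1 x2 = l2 + l3 * l1 := by
  have hin (x1 : ℕ) : ∑' x2 : ℕ, (x2 : ℝ) * pseudoPoissonPMF l1 l2 l3 x1 x2
      = l2 * poissonWeight l1 x1 + l3 * (x1 * poissonWeight l1 x1) := by
    simp only [pseudoPoissonPMF_eq, mul_left_comm _ (poissonWeight l1 x1)]
    rw [((hasSum_poissonWeight_first (l2 + l3 * x1)).mul_left (poissonWeight l1 x1)).tsum_eq]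
    ring
  simp only [hin]
  rw [(((hasSum_poissonWeight l1).mul_left l2).add
    ((hasSum_poissonWeight_first l1).mul_left l3)).tsum_eq, mul_one]

lemma tsum_pseudoPoisson_second (l1 l2 l3 : ℝ) :
    ∑' x1 : ℕ, ∑' x2 : ℕ, (x2 : ℝ) ^ 2 * pseudoPoissonPMF l1 l2 l3 x1 x2
      = (l2 + l3 * l1) + l3 ^ 2 * l1 + (l2 + l3 * l1) ^ 2 := by
  have hin (x1 : ℕ) : ∑' x2 : ℕ, (x2 : ℝ) ^ 2 * pseudoPoissonPMF l1 l2 l3 x1 x2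
      = (l2 + l2 ^ 2) * poissonWeight l1 x1 + (l3 + 2 * l2 * l3) * (x1 * poissonWeight l1 x1)
        + l3 ^ 2 * ((x1 : ℝ) ^ 2 * poissonWeight l1 x1) := by
    simp only [pseudoPoissonPMF_eq, mul_left_comm _ (poissonWeight l1 x1)]
    rw [((hasSum_poissonWeight_second (l2 + l3 * x1)).mul_left (poissonWeight l1 x1)).tsum_eq]
    ring
  simp only [hin]
  rw [((((hasSum_poissonWeight l1).mul_left (l2 + l2 ^ 2)).add
    ((hasSum_poissonWeight_first l1).mul_left (l3 + 2 * l2 * l3))).add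
    ((hasSum_poissonWeight_second l1).mul_left (l3 ^ 2))).tsum_eq]
  ring

/-- The Fisher dispersion index of the second coordinate of the bivariate
Pseudo-Poisson distribution is `DI(X2) = 1 + λ3²·λ1/(λ2 + λ3·λ1)`; in
particular `DI(X2) > 1` (over-dispersion) whenever `λ3 > 0`. -/
theorem pseudoPoisson_dispersion_index_snd (l1 l2 l3 : ℝ)
    (h1 : 0 < l1) (h2 : 0 ≤ l2) (h3 : 0 ≤ l3) (h23 : 0 < l2 + l3)
    (EX2 VarX2 : ℝ)
    (hEX2 : EX2 = ∑' x1 : ℕ, ∑' x2 : ℕ, (x2 : ℝ) * pseudoPoissonPMF l1 l2 l3 x1 x2)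
    (hVarX2 : VarX2 =
      (∑' x1 : ℕ, ∑' x2 : ℕ, (x2 : ℝ) ^ 2 * pseudoPoissonPMF l1 l2 l3 x1 x2) - EX2 ^ 2) :
    VarX2 / EX2 = 1 + l3 ^ 2 * l1 / (l2 + l3 * l1) ∧
      (0 < l3 → 1 < VarX2 / EX2) := by
  rw [tsum_pseudoPoisson_first] at hEX2
  rw [tsum_pseudoPoisson_second, hEX2, add_sub_cancel_right] at hVarX2
  -- `l2` and `l3` do not both vanish, so the mean is positive and the quotient is genuine.
  have hpos : 0 < l2 + l3 * l1 := by
    rcases h3.eq_or_lt with h | h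
    · rw [← h] at h23 ⊢
      simpa using h23
    · positivity
  have hDI : VarX2 / EX2 = 1 + l3 ^ 2 * l1 / (l2 + l3 * l1) := by
    rw [hVarX2, hEX2, add_div, div_self hpos.ne']
  refine ⟨hDI, fun hl3 => ?_⟩
  rw [hDI]
  exact lt_add_of_pos_right 1 (by positivity)
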